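/- Let G = ℤ/4 act on L = ℤ^4 by the matrix M = [[0,1,0,0],[-1,0,0,1],[0,0,-1,1],[0,0,0,1]]. Then for the induced action of G on H^j(L,ℤ): H^0(G, H^j(L,ℤ)) ≅ ℤ for 0 ≤ j ≤ 3; H^i(G, H^j(L,ℤ)) ≅ ℤ/2 for j = 1,3 and all i ≥ 1; H^i(G, H^2(L,ℤ)) ≅ ℤ/2 for even i ≥ 2; H^i(G, H^4(L,ℤ)) ≅ ℤ/2 for odd i; H^i(G, H^0(L,ℤ)) ≅ ℤ/4 for even i ≥ 2; H^i(G, H^2(L,ℤ)) ≅ ℤ/4 for odd i; and H^i(G, H^j(L,ℤ)) = 0 in all remaining cases. -/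

import Mathlib

open Matrix

namespace Crystal

/-- The lattice `ℤ^n`, written multiplicatively so that it can be a factor of a semidirect
product of groups. -/
abbrev Lat (n : ℕ) : Type := Multiplicative (Fin n → ℤ)

/-- The invertible integer matrix determined by `M` with `M ^ (m + 1) = 1`. -/
def matUnit {n : ℕ} (M : Matrix (Fin n) (Fin n) ℤ) (m : ℕ) (hm : M ^ (m + 1) = 1) :
    (Matrix (Fin n) (Fin n) ℤ)ˣ :=
  ⟨M, M ^ m, by rw [← pow_succ']; exact hm, by rw [← pow_succ]; exact hm⟩

/-- Linear automorphisms of `ℤ^n` as multiplicative automorphisms of the multiplicative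
version of `ℤ^n`. -/
def linToAut (n : ℕ) : ((Fin n → ℤ) ≃ₗ[ℤ] (Fin n → ℤ)) →* MulAut (Lat n) :=
  MonoidHom.mk' (fun e => AddEquiv.toMultiplicative e.toAddEquiv) (fun _ _ => rfl)

/-- An invertible integer matrix acts on the (multiplicative) lattice `ℤ^n` by (left)
matrix-vector multiplication. -/
def glToAut (n : ℕ) : (Matrix (Fin n) (Fin n) ℤ)ˣ →* MulAut (Lat n) :=
  (linToAut n).comp
    ((LinearMap.GeneralLinearGroup.generalLinearEquiv ℤ (Fin n → ℤ)).toMonoidHom.comp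
      (Matrix.GeneralLinearGroup.toLin).toMonoidHom)

/-- The homomorphism from `ℤ/m` (written multiplicatively) to a group `G` sending the
generator `1` to a chosen element `α` satisfying `α ^ m = 1`. -/
def zmodHom {G : Type*} [Group G] (m : ℕ) [NeZero m] (α : G) (hα : α ^ m = 1) :
    Multiplicative (ZMod m) →* G :=
  MonoidHom.mk' (fun g => α ^ (g.toAdd.val)) (by
    intro a b
    show α ^ (ZMod.val (a.toAdd + b.toAdd)) = α ^ (ZMod.val a.toAdd) * α ^ (ZMod.val b.toAdd)
    rw [ZMod.val_add, ← pow_eq_pow_mod _ hα, pow_add])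

/-- The action of `ℤ/q` on the lattice `ℤ^n` in which the generator `1` of `ℤ/q` acts by left
multiplication by the integer matrix `M`; `M` is required to satisfy `M ^ q = 1`. -/
def matAction {n : ℕ} (q : ℕ) [NeZero q] (M : Matrix (Fin n) (Fin n) ℤ)
    (hq : M ^ q = 1) : Multiplicative (ZMod q) →* MulAut (Lat n) :=
  zmodHom q (glToAut n (matUnit M (q - 1) (by
      rwa [Nat.sub_add_cancel (Nat.one_le_iff_ne_zero.2 (NeZero.ne q))])))
    (by
      rw [← map_pow]
      convert map_one (glToAut n)
      ext i j
      rw [Units.val_pow_eq_pow_val]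
      simp [matUnit, hq])

/-- The crystallographic group `ℤ^n ⋊ ℤ/q` in which the generator `1` of `ℤ/q` acts on the
lattice `ℤ^n` by left multiplication by the integer matrix `M` (with `M ^ q = 1`). -/
abbrev Crys {n : ℕ} (q : ℕ) [NeZero q] (M : Matrix (Fin n) (Fin n) ℤ) (hq : M ^ q = 1) : Type :=
  SemidirectProduct (Lat n) (Multiplicative (ZMod q)) (matAction q M hq)


open CategoryTheory groupCohomology

variable {k : Type} [CommRing k]

lemma comp_contractNth {G H : Type*} [Monoid G] [Monoid H] (f : G →* H) {n : ℕ}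
    (j : Fin (n + 1)) (g : Fin (n + 1) → G) (i : Fin n) :
    f (Fin.contractNth j (· * ·) g i) = Fin.contractNth j (· * ·) (fun l => f (g l)) i := by
  rcases lt_trichotomy (i : ℕ) j with h | h | h
  · rw [Fin.contractNth_apply_of_lt _ _ _ _ h, Fin.contractNth_apply_of_lt _ _ _ _ h]
  · rw [Fin.contractNth_apply_of_eq _ _ _ _ h, Fin.contractNth_apply_of_eq _ _ _ _ h,
      _root_.map_mul]
  · rw [Fin.contractNth_apply_of_gt _ _ _ _ h, Fin.contractNth_apply_of_gt _ _ _ _ h]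

/-- The map of inhomogeneous cochain complexes induced (contravariantly in the group,
covariantly in the coefficients) by a group homomorphism `f : H →* G` together with a
compatible linear map `τ : A → B` of coefficients. -/
def cochainsMap {G H : Type} [Group G] [Group H] (A : Rep k G) (B : Rep k H)
    (f : H →* G) (τ : A →ₗ[k] B)
    (hcomp : ∀ (h : H) (a : A), τ (A.ρ (f h) a) = B.ρ h (τ a)) :
    inhomogeneousCochains A ⟶ inhomogeneousCochains B where
  f n := ModuleCat.ofHom
    { toFun := fun F v => τ (F (fun i => f (v i)))
      map_add' := fun x y => by funext v; simp
      map_smul' := fun r x => by funext v; simp }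
  comm' i j hij := by
    have hij' : i + 1 = j := hij
    subst hij'
    rw [inhomogeneousCochains.d_def, inhomogeneousCochains.d_def]
    ext F v
    show (inhomogeneousCochains.d B i).hom (fun w => τ (F (fun l => f (w l)))) v
      = τ ((inhomogeneousCochains.d A i).hom F (fun l => f (v l)))
    simp only [inhomogeneousCochains.d_hom_apply, map_add, map_sum, _root_.map_smul]
    congr 1
    · exact (hcomp (v 0) _).symm
    · refine Finset.sum_congr rfl fun j' _ => ?_
      have hc : (fun l => f (j'.contractNth (· * ·) v l))
          = j'.contractNth (· * ·) (fun l => f (v l)) := by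
        funext l
        exact comp_contractNth f j' v l
      rw [hc]

lemma cochainsMap_eq_id {G : Type} [Group G] (A : Rep k G) (f : G →* G) (τ : A →ₗ[k] A)
    (hcomp : ∀ (h : G) (a : A), τ (A.ρ (f h) a) = A.ρ h (τ a))
    (hf : ∀ x, f x = x) (hτ : ∀ a, τ a = a) :
    cochainsMap A A f τ hcomp = 𝟙 _ := by
  apply HomologicalComplex.Hom.ext
  funext n
  ext F v
  show τ (F (fun i => f (v i))) = F v
  simp only [hf, hτ]

lemma cochainsMap_comp {G H K : Type} [Group G] [Group H] [Group K]
    (A : Rep k G) (B : Rep k H) (C : Rep k K)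
    (f₁ : H →* G) (τ₁ : A →ₗ[k] B) (h₁ : ∀ (h : H) (a : A), τ₁ (A.ρ (f₁ h) a) = B.ρ h (τ₁ a))
    (f₂ : K →* H) (τ₂ : B →ₗ[k] C) (h₂ : ∀ (h : K) (a : B), τ₂ (B.ρ (f₂ h) a) = C.ρ h (τ₂ a))
    (f₃ : K →* G) (τ₃ : A →ₗ[k] C) (h₃ : ∀ (h : K) (a : A), τ₃ (A.ρ (f₃ h) a) = C.ρ h (τ₃ a))
    (hf : ∀ x, f₁ (f₂ x) = f₃ x) (hτ : ∀ a, τ₂ (τ₁ a) = τ₃ a) :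
    cochainsMap A B f₁ τ₁ h₁ ≫ cochainsMap B C f₂ τ₂ h₂ = cochainsMap A C f₃ τ₃ h₃ := by
  apply HomologicalComplex.Hom.ext
  funext n
  ext F v
  show τ₂ (τ₁ (F (fun i => f₁ (f₂ (v i))))) = τ₃ (F (fun i => f₃ (v i)))
  simp only [hf]
  exact hτ _

/-- Given an action `φ` of a group `G` on a group `L` and a representation `ψ` of `G` on a
`k`-module `V`, this is `H^j(L, V)` (with `L` acting trivially on the coefficients `V`),
endowed with the `G`-action functorially induced by the action of `G` on `L` and on `V`:
`g` acts via the conjugation automorphism `φ g⁻¹` of `L` and via `ψ g` on `V`. -/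
noncomputable def cohRep {G L V : Type} [Group G] [Group L] [AddCommGroup V] [Module k V]
    (φ : G →* MulAut L) (ψ : Representation k G V) (j : ℕ) : Rep k G :=
  Rep.of (X := groupCohomology (Rep.trivial k L V) j)
    { toFun := fun g => (HomologicalComplex.homologyMap
        (cochainsMap (Rep.trivial k L V) (Rep.trivial k L V) (φ g⁻¹).toMonoidHom (ψ g)
          (fun _ _ => rfl)) j).hom
      map_one' := by
        have h := cochainsMap_eq_id (Rep.trivial k L V) (φ 1⁻¹).toMonoidHom (ψ 1)
          (fun _ _ => rfl) (fun x => by simp) (fun a => by simp)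
        rw [h, HomologicalComplex.homologyMap_id]
        rfl
      map_mul' := fun g₁ g₂ => by
        have h := cochainsMap_comp (Rep.trivial k L V) (Rep.trivial k L V) (Rep.trivial k L V)
          (φ g₂⁻¹).toMonoidHom (ψ g₂) (fun _ _ => rfl)
          (φ g₁⁻¹).toMonoidHom (ψ g₁) (fun _ _ => rfl)
          (φ (g₁ * g₂)⁻¹).toMonoidHom (ψ (g₁ * g₂)) (fun _ _ => rfl)
          (fun x => by simp [_root_.mul_inv_rev]) (fun a => by simp)
        rw [← h, HomologicalComplex.homologyMap_comp]
        rfl }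


/-- `H^i(G, H^j(L, ℤ))`: the `i`-th cohomology of the cyclic group `ℤ/q` with coefficients in
the `j`-th cohomology of the lattice `ℤ^n` (with trivial `ℤ` coefficients), where the
`ℤ/q`-action on `H^j(ℤ^n, ℤ)` is the one functorially induced by the matrix action on the
lattice. -/
noncomputable abbrev cohOfCoh {n : ℕ} (q : ℕ) [NeZero q] (M : Matrix (Fin n) (Fin n) ℤ)
    (hq : M ^ q = 1) (i j : ℕ) : ModuleCat ℤ :=
  groupCohomology
    (cohRep (matAction q M hq) (1 : Representation ℤ (Multiplicative (ZMod q)) ℤ) j) i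

/-- `H^k(Γ, ℤ)` for `Γ = ℤ^n ⋊ ℤ/q`, with trivial coefficients `ℤ`. -/
noncomputable abbrev cohCrys {n : ℕ} (q : ℕ) [NeZero q] (M : Matrix (Fin n) (Fin n) ℤ)
    (hq : M ^ q = 1) (k : ℕ) : ModuleCat ℤ :=
  groupCohomology (Rep.trivial ℤ (Crys q M hq) ℤ) k

end Crystal

/-- The holonomy matrix. -/
def holM : Matrix (Fin 4) (Fin 4) ℤ := !![0, 1, 0, 0; -1, 0, 0, 1; 0, 0, -1, 1; 0, 0, 0, 1]

lemma holM_pow : holM ^ 4 = 1 := by decide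

/-- `H^k(ℤ^4 ⋊ ℤ/4, ℤ)`, where the generator of `ℤ/4` acts on `ℤ^4` by left
multiplication by the matrix `holM`. -/
noncomputable abbrev H (k : ℕ) : ModuleCat ℤ := Crystal.cohCrys 4 holM holM_pow k

/-- `H^i(ℤ/4, H^j(ℤ^4, ℤ))`, with the functorially induced action on coefficients. -/
noncomputable abbrev Hc (i j : ℕ) : ModuleCat ℤ := Crystal.cohOfCoh 4 holM holM_pow i j

section GenBound
open CategoryTheory groupCohomology

/-- `A` is generated by `s` elements. -/
def Gen (s : ℕ) (A : Type) [AddCommGroup A] : Prop :=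
  ∃ f : (Fin s → ℤ) →+ A, Function.Surjective f

lemma Gen.of_surj {s : ℕ} {A B : Type} [AddCommGroup A] [AddCommGroup B]
    (h : Gen s A) (f : A →+ B) (hf : Function.Surjective f) : Gen s B := by
  obtain ⟨g, hg⟩ := h
  exact ⟨f.comp g, hf.comp hg⟩

lemma Gen.mono {s t : ℕ} {A : Type} [AddCommGroup A] (h : Gen s A) (hst : s ≤ t) :
    Gen t A := by
  obtain ⟨g, hg⟩ := h
  refine ⟨g.comp (LinearMap.funLeft ℤ ℤ (Fin.castLE hst)).toAddMonoidHom, hg.comp ?_⟩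
  exact LinearMap.funLeft_surjective_of_injective ℤ ℤ _ (Fin.castLE_injective hst)

lemma Gen.subgroup {s : ℕ} {A : Type} [AddCommGroup A] (h : Gen s A)
    (N : AddSubgroup A) : Gen s N := by
  obtain ⟨g, hg⟩ := h
  let N' : Submodule ℤ (Fin s → ℤ) := (AddSubgroup.toIntSubmodule (N.comap g))
  obtain ⟨n, ⟨b⟩⟩ := Submodule.nonempty_basis_of_pid (Pi.basisFun ℤ (Fin s)) N'
  have hn : n ≤ s := by
    have h1 := Submodule.finrank_le N'
    rw [Module.finrank_eq_card_basis b] at h1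
    simpa using h1
  have h0 : Gen n N' := ⟨b.equivFun.symm.toLinearMap.toAddMonoidHom, b.equivFun.symm.surjective⟩
  refine (h0.of_surj (AddMonoidHom.mk' (fun x => (⟨g x.1, x.2⟩ : N))
    (fun x y => Subtype.ext (map_add g _ _))) ?_).mono hn
  rintro ⟨y, hy⟩
  obtain ⟨x, rfl⟩ := hg y
  exact ⟨⟨x, hy⟩, rfl⟩

lemma Gen.exact {s t : ℕ} {A B C : Type} [AddCommGroup A] [AddCommGroup B] [AddCommGroup C]
    (hA : Gen s A) (hC : Gen t C) (f : A →+ B) (g : B →+ C)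
    (hfg : ∀ b, g b = 0 → ∃ a, f a = b) : Gen (s + t) B := by
  obtain ⟨p, hp⟩ := hA
  obtain ⟨q, hq⟩ := hC.subgroup g.range
  obtain ⟨r, hr⟩ := Module.projective_lifting_property g.rangeRestrict.toIntLinearMap
    q.toIntLinearMap g.rangeRestrict_surjective
  refine ⟨((LinearMap.coprod (f.toIntLinearMap ∘ₗ p.toIntLinearMap) r) ∘ₗ
    (LinearEquiv.sumArrowLequivProdArrow (Fin s) (Fin t) ℤ ℤ).toLinearMap ∘ₗ
    (LinearEquiv.funCongrLeft ℤ ℤ finSumFinEquiv).toLinearMap).toAddMonoidHom, ?_⟩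
  rw [LinearMap.toAddMonoidHom_coe, LinearMap.coe_comp, LinearMap.coe_comp]
  refine Function.Surjective.comp ?_ ((LinearEquiv.surjective _).comp (LinearEquiv.surjective _))
  intro b
  obtain ⟨y, hy⟩ := hq (g.rangeRestrict b)
  obtain ⟨a, ha⟩ := hfg (b - r y) (by
    have := congrArg Subtype.val (LinearMap.congr_fun hr y)
    simp [hy] at this
    simp [this])
  obtain ⟨x, rfl⟩ := hp a
  exact ⟨(x, y), by simp [ha]⟩

lemma exists_primitive (F : ℤ → ℤ) : ∃ u : ℤ → ℤ, ∀ n, u (n + 1) - u n = F n := by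
  refine ⟨fun n => ∑ k ∈ Finset.range n.toNat, F k
    - ∑ k ∈ Finset.range (-n).toNat, F (-((k : ℤ) + 1)), fun n => ?_⟩
  rcases n with n | n
  · have h1 : (Int.ofNat n + 1).toNat = n + 1 := by simp
    have h2 : (-(Int.ofNat n + 1)).toNat = 0 := by simp
    have h3 : (Int.ofNat n).toNat = n := by simp
    have h4 : (-(Int.ofNat n)).toNat = 0 := by simp
    simp only [h1, h2, h3, h4, Finset.sum_range_succ]
    simp
  · have h1 : (Int.negSucc n + 1).toNat = 0 := by omega
    have h2 : (-(Int.negSucc n + 1)).toNat = n := by omega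
    have h3 : (Int.negSucc n).toNat = 0 := by omega
    have h4 : (-(Int.negSucc n)).toNat = n + 1 := by omega
    simp only [h1, h2, h3, h4, Finset.sum_range_succ]
    simp [Int.negSucc_eq]

variable {Γ : Type} [CommGroup Γ] (p : Γ →* Multiplicative ℤ) (t : Γ)

/-- Functions on `Γ` invariant under the kernel of `p`. -/
noncomputable abbrev coindK : Rep ℤ Γ :=
  Rep.coind p.ker.subtype (Rep.trivial ℤ p.ker ℤ)

/-- Inclusion of the constants. -/
noncomputable def constMap : Rep.trivial ℤ Γ ℤ ⟶ coindK p :=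
  Rep.ofHom
    { toFun := fun a => ⟨fun _ => a, fun _ _ => rfl⟩
      map_add' := fun _ _ => rfl
      map_smul' := fun _ _ => rfl
      isIntertwining' := fun _ => rfl }

/-- The sequence `ℤ → Fun(ℤ) → Fun(ℤ)`. -/
noncomputable def coindSeq : ShortComplex (Rep ℤ Γ) :=
  ShortComplex.mk (constMap p) (Rep.applyAsHom (coindK p) t - 𝟙 _) (by
    apply Rep.hom_ext
    ext h
    show (1 : ℤ) - 1 = 0
    simp)

universe u in
lemma rep_exact_of {k G : Type u} [CommRing k] [Group G] (X : ShortComplex (Rep.{u} k G))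
    (h : ∀ x : X.X₂, X.g.hom x = 0 → ∃ y : X.X₁, X.f.hom y = x) : X.Exact := by
  rw [← ShortComplex.exact_map_iff_of_faithful _ (forget₂ (Rep.{u} k G) (ModuleCat.{u} k)),
    ShortComplex.moduleCat_exact_iff]
  exact h

lemma coindSeq_shortExact (ht : p t = Multiplicative.ofAdd 1) : (coindSeq p t).ShortExact where
  exact := by
    apply rep_exact_of
    rintro ⟨f, hf⟩ h0
    have h1 : ∀ h, f (h * t) = f h := fun h => by
      have := congrFun (congrArg Subtype.val h0) h
      exact sub_eq_zero.1 this
    have h2 : ∀ (n : ℤ) h, f (h * t ^ n) = f h := by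
      intro n
      induction n using Int.induction_on with
      | zero => simp
      | succ n ih => intro h; rw [_root_.zpow_add_one, ← mul_assoc, h1, ih]
      | pred n ih =>
        intro h
        rw [← h1 (h * t ^ (-(n : ℤ) - 1)), mul_assoc, ← _root_.zpow_add_one]
        simpa using ih h
    refine ⟨f 1, ?_⟩
    apply Subtype.ext
    funext h
    show f 1 = f h
    have := hf ⟨h * (t ^ (p h).toAdd)⁻¹, by
        rw [MonoidHom.mem_ker, map_mul, map_inv, map_zpow, ht, ← ofAdd_zsmul]; simp⟩
        1
    rw [mul_one] at this
    refine this.symm.trans ?_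
    simpa using h2 (-(p h).toAdd) h
  mono_f := by
    rw [Rep.mono_iff_injective]
    intro a b hab
    exact congrFun (congrArg Subtype.val hab) 1
  epi_g := by
    rw [Rep.epi_iff_surjective]
    rintro ⟨f, hf⟩
    obtain ⟨u, hu⟩ := exists_primitive (fun n => f (t ^ n))
    refine ⟨⟨fun h => u (p h).toAdd, ?_⟩, ?_⟩
    · rintro ⟨s, hs⟩ h
      have hs' : p s = 1 := hs
      show u (p (s * h)).toAdd = u (p h).toAdd
      simp [hs']
    · apply Subtype.ext
      funext h
      show u (p (h * t)).toAdd - u (p h).toAdd = f h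
      rw [map_mul, ht]
      rw [toAdd_mul, toAdd_ofAdd, hu]
      have := hf ⟨h * (t ^ (p h).toAdd)⁻¹, by
        rw [MonoidHom.mem_ker, map_mul, map_inv, map_zpow, ht, ← ofAdd_zsmul]; simp⟩
        (t ^ (p h).toAdd)
      simpa using this.symm

lemma gen_step (ht : p t = Multiplicative.ofAdd 1) (a b j : ℕ)
    (ha : Gen a (groupCohomology (Rep.trivial ℤ p.ker ℤ) j))
    (hb : Gen b (groupCohomology (Rep.trivial ℤ p.ker ℤ) (j + 1))) :
    Gen (a + b) (groupCohomology (Rep.trivial ℤ Γ ℤ) (j + 1)) := by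
  have hX := coindSeq_shortExact p t ht
  have hex := mapShortComplex₁_exact hX (rfl : j + 1 = j + 1)
  rw [ShortComplex.moduleCat_exact_iff] at hex
  have ha' : Gen a (groupCohomology (coindK p) j) :=
    ha.of_surj (coindIso (Rep.trivial ℤ p.ker ℤ) j).toLinearEquiv.symm.toLinearMap.toAddMonoidHom
      (coindIso (Rep.trivial ℤ p.ker ℤ) j).toLinearEquiv.symm.surjective
  have hb' : Gen b (groupCohomology (coindK p) (j + 1)) :=
    hb.of_surj
      (coindIso (Rep.trivial ℤ p.ker ℤ) (j + 1)).toLinearEquiv.symm.toLinearMap.toAddMonoidHom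
      (coindIso (Rep.trivial ℤ p.ker ℤ) (j + 1)).toLinearEquiv.symm.surjective
  exact Gen.exact ha' hb' (mapShortComplex₁ hX (rfl : j + 1 = j + 1)).f.hom.toAddMonoidHom
    (mapShortComplex₁ hX (rfl : j + 1 = j + 1)).g.hom.toAddMonoidHom hex

lemma gen_zero (G : Type) [Group G] : Gen 1 (groupCohomology (Rep.trivial ℤ G ℤ) 0) := by
  have h : Gen 1 ℤ := ⟨(LinearMap.proj (R := ℤ) (φ := fun _ : Fin 1 => ℤ) 0).toAddMonoidHom,
    fun x => ⟨fun _ => x, rfl⟩⟩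
  have h2 := h.subgroup (Rep.trivial ℤ G ℤ).ρ.invariants.toAddSubgroup
  exact h2.of_surj (H0Iso (Rep.trivial ℤ G ℤ)).toLinearEquiv.symm.toLinearMap.toAddMonoidHom
    (H0Iso (Rep.trivial ℤ G ℤ)).toLinearEquiv.symm.surjective

lemma gen_bound (n : ℕ) : ∀ (Γ : Type) [CommGroup Γ] (_ : Γ ≃* Crystal.Lat n) (j : ℕ),
    Gen (n.choose j) (groupCohomology (Rep.trivial ℤ Γ ℤ) j) := by
  induction n with
  | zero =>
    intro Γ _ e j
    cases j with
    | zero => exact gen_zero Γ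
    | succ j =>
      have : Subsingleton Γ := e.toEquiv.subsingleton
      have h := isZero_groupCohomology_succ_of_subsingleton (Rep.trivial ℤ Γ ℤ) j
      have := ModuleCat.subsingleton_of_isZero h
      exact ⟨0, fun x => ⟨0, Subsingleton.elim _ _⟩⟩
  | succ n ih =>
    intro Γ _ e j
    cases j with
    | zero => simpa using gen_zero Γ
    | succ j =>
      let p : Γ →* Multiplicative ℤ :=
        MonoidHom.mk' (fun x => Multiplicative.ofAdd ((e x).toAdd 0)) (fun x y => by simp)
      have hp : ∀ x : Γ, p x = Multiplicative.ofAdd ((e x).toAdd 0) := fun _ => rfl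
      let e' : p.ker ≃* Crystal.Lat n :=
        { toFun := fun x => Multiplicative.ofAdd (fun i => (e x.1).toAdd i.succ)
          invFun := fun y => ⟨e.symm (Multiplicative.ofAdd (Fin.cons 0 y.toAdd)), by
            rw [MonoidHom.mem_ker, hp]; simp⟩
          left_inv := fun x => by
            have hx : (e x.1).toAdd 0 = 0 := x.2
            apply Subtype.ext
            show e.symm _ = x.1
            rw [MulEquiv.symm_apply_eq]
            apply Multiplicative.toAdd.injective
            funext i
            refine Fin.cases ?_ (fun i => ?_) i
            · simp [hx]
            · simp
          right_inv := fun y => by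
            apply Multiplicative.toAdd.injective
            funext i
            simp
          map_mul' := fun x y => by
            apply Multiplicative.toAdd.injective
            funext i
            simp }
      rw [Nat.choose_succ_succ]
      exact gen_step p (e.symm (Multiplicative.ofAdd (Pi.single 0 1))) (by rw [hp]; simp) _ _ j
        (ih p.ker e' j) (ih p.ker e' (j + 1))
end GenBound

section Pairing
open CategoryTheory groupCohomology

variable {L : Type} [CommGroup L]

/-- Antisymmetrized evaluation of cochains. -/
def antisym {j : ℕ} (v : Fin j → L) : ((Fin j → L) → ℤ) →ₗ[ℤ] ℤ where
  toFun F := ∑ σ : Equiv.Perm (Fin j), (Equiv.Perm.sign σ : ℤ) * F (fun i => v (σ i))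
  map_add' F F' := by simp [mul_add, Finset.sum_add_distrib]
  map_smul' r F := by
    simp only [Pi.smul_apply, smul_eq_mul, RingHom.id_apply, Finset.mul_sum]
    exact Finset.sum_congr rfl fun _ _ => by ring

lemma antisym_apply {j : ℕ} (v : Fin j → L) (F : (Fin j → L) → ℤ) :
    antisym v F = ∑ σ : Equiv.Perm (Fin j), (Equiv.Perm.sign σ : ℤ) * F (fun i => v (σ i)) := rfl

lemma trivial_d_apply (n : ℕ) (F : (Fin n → L) → ℤ) (g : Fin (n + 1) → L) :
    (inhomogeneousCochains.d (Rep.trivial ℤ L ℤ) n).hom F g =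
      F (fun i => g i.succ) + ∑ j : Fin (n + 1),
        (-1 : ℤ) ^ ((j : ℕ) + 1) * F (Fin.contractNth j (· * ·) g) := rfl

lemma contractNth_castSucc_comp_swap {n : ℕ} (i : Fin n) (g : Fin (n + 1) → L) :
    Fin.contractNth i.castSucc (· * ·) (fun l => g (Equiv.swap i.castSucc i.succ l)) =
      Fin.contractNth i.castSucc (· * ·) g := by
  funext k
  rcases lt_trichotomy (k : ℕ) (i.castSucc : Fin (n + 1)) with h | h | h
  · rw [Fin.contractNth_apply_of_lt _ _ _ _ h, Fin.contractNth_apply_of_lt _ _ _ _ h,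
      Equiv.swap_apply_of_ne_of_ne]
    · intro h'; rw [Fin.ext_iff] at h'; simp at h h'; omega
    · intro h'; rw [Fin.ext_iff] at h'; simp at h h'; omega
  · rw [Fin.contractNth_apply_of_eq _ _ _ _ h, Fin.contractNth_apply_of_eq _ _ _ _ h]
    obtain rfl : k = i := Fin.ext h
    simp [mul_comm]
  · rw [Fin.contractNth_apply_of_gt _ _ _ _ h, Fin.contractNth_apply_of_gt _ _ _ _ h,
      Equiv.swap_apply_of_ne_of_ne]
    · intro h'; rw [Fin.ext_iff] at h'; simp at h h'; omega
    · intro h'; rw [Fin.ext_iff] at h'; simp at h h'; omega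

lemma contractNth_last {n : ℕ} (g : Fin (n + 1) → L) :
    Fin.contractNth (Fin.last n) (· * ·) g = fun i => g i.castSucc := by
  funext k
  rw [Fin.contractNth_apply_of_lt _ _ _ _ (by simp)]

lemma antisym_mid {n : ℕ} (v : Fin (n + 1) → L) (F : (Fin n → L) → ℤ) (i : Fin n) :
    ∑ σ : Equiv.Perm (Fin (n + 1)), (Equiv.Perm.sign σ : ℤ) *
      F (Fin.contractNth i.castSucc (· * ·) (fun l => v (σ l))) = 0 := by
  refine Finset.sum_involution (fun σ _ => σ * Equiv.swap i.castSucc i.succ) ?_ ?_ ?_ ?_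
  · intro σ _
    have h := contractNth_castSucc_comp_swap i (fun l => v (σ l))
    simp only [Equiv.Perm.coe_mul, Function.comp_apply]
    rw [h, Equiv.Perm.sign_mul, Equiv.Perm.sign_swap (by simp [Fin.ext_iff])]
    simp
  · intro σ _ _ h
    have := mul_eq_left.1 h
    rw [Equiv.swap_eq_one_iff] at this
    simp [Fin.ext_iff] at this
  · intro σ _; simp
  · intro σ _; simp [mul_assoc]

lemma antisym_ends {n : ℕ} (v : Fin (n + 1) → L) (F : (Fin n → L) → ℤ) :
    ∑ σ : Equiv.Perm (Fin (n + 1)), (Equiv.Perm.sign σ : ℤ) * F (fun l => v (σ l.succ)) =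
    (-1) ^ n * ∑ σ : Equiv.Perm (Fin (n + 1)), (Equiv.Perm.sign σ : ℤ) *
      F (fun l => v (σ l.castSucc)) := by
  rw [Finset.mul_sum]
  refine Fintype.sum_equiv (Equiv.mulRight (finRotate (n + 1))) _ _ fun σ => ?_
  have h1 : ∀ l : Fin n, (σ * finRotate (n + 1)) l.castSucc = σ l.succ := by
    intro l
    rw [Equiv.Perm.mul_apply, finRotate_apply, Fin.coeSucc_eq_succ]
  have h2 : ((-1 : ℤ) ^ n) * (-1) ^ n = 1 := by rw [← mul_pow]; simp
  simp only [Equiv.coe_mulRight, h1, Equiv.Perm.sign_mul, sign_finRotate]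
  push_cast
  linear_combination (-(Equiv.Perm.sign σ : ℤ) * F (fun l => v (σ l.succ))) * h2

lemma antisym_d {n : ℕ} (v : Fin (n + 1) → L) (F : (Fin n → L) → ℤ) :
    antisym v ((inhomogeneousCochains.d (Rep.trivial ℤ L ℤ) n).hom F) = 0 := by
  show ∑ σ : Equiv.Perm (Fin (n + 1)), (Equiv.Perm.sign σ : ℤ) *
    (F (fun i => v (σ i.succ)) + ∑ j : Fin (n + 1),
        (-1 : ℤ) ^ ((j : ℕ) + 1) * F (Fin.contractNth j (· * ·) (fun i => v (σ i)))) = 0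
  simp only [mul_add, Finset.sum_add_distrib, Finset.mul_sum]
  rw [Finset.sum_comm, Fin.sum_univ_castSucc, antisym_ends]
  have h : ∀ i : Fin n, ∑ σ : Equiv.Perm (Fin (n + 1)), (Equiv.Perm.sign σ : ℤ) *
      ((-1) ^ ((i.castSucc : ℕ) + 1) *
      F (Fin.contractNth i.castSucc (· * ·) (fun l => v (σ l)))) = 0 := by
    intro i
    rw [← mul_zero ((-1) ^ ((i.castSucc : ℕ) + 1)), ← antisym_mid v F i, Finset.mul_sum]
    exact Finset.sum_congr rfl fun _ _ => by ring
  rw [Finset.sum_eq_zero fun i _ => h i, zero_add, Finset.mul_sum, ← Finset.sum_add_distrib]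
  refine Finset.sum_eq_zero fun σ _ => ?_
  rw [contractNth_last, Fin.val_last]
  ring

/-- Product of homomorphisms as a cochain. -/
def prodCochain {n : ℕ} (φ : Fin n → L →* Multiplicative ℤ) : (Fin n → L) → ℤ :=
  fun v => ∏ i, (φ i (v i)).toAdd

lemma prodCochain_contract {n : ℕ} (φ : Fin n → L →* Multiplicative ℤ) (v : Fin (n + 1) → L)
    (i : Fin n) : prodCochain φ (Fin.contractNth i.castSucc (· * ·) v) =
      prodCochain φ (fun l => v (i.castSucc.succAbove l)) +
      prodCochain φ (fun l => v (i.succ.succAbove l)) := by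
  unfold prodCochain
  rw [← Finset.mul_prod_erase _ _ (Finset.mem_univ i), ← Finset.mul_prod_erase _ _ (Finset.mem_univ i),
    ← Finset.mul_prod_erase Finset.univ (fun l => (φ l (v (i.succ.succAbove l))).toAdd)
      (Finset.mem_univ i)]
  have h1 : ∀ l ∈ Finset.univ.erase i, (φ l (v (i.castSucc.succAbove l))).toAdd =
      (φ l (Fin.contractNth i.castSucc (· * ·) v l)).toAdd := by
    intro l hl
    have hne : l ≠ i := Finset.ne_of_mem_erase hl
    rcases lt_or_gt_of_ne hne with h | h
    · rw [Fin.contractNth_apply_of_lt _ _ _ _ (by simpa using h),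
        Fin.succAbove_of_castSucc_lt _ _ (by simpa using h)]
    · rw [Fin.contractNth_apply_of_gt _ _ _ _ (by simpa using h),
        Fin.succAbove_of_le_castSucc _ _ (by simpa using h.le)]
  have h2 : ∀ l ∈ Finset.univ.erase i, (φ l (v (i.succ.succAbove l))).toAdd =
      (φ l (Fin.contractNth i.castSucc (· * ·) v l)).toAdd := by
    intro l hl
    have hne : l ≠ i := Finset.ne_of_mem_erase hl
    rcases lt_or_gt_of_ne hne with h | h
    · rw [Fin.contractNth_apply_of_lt _ _ _ _ (by simpa using h),
        Fin.succAbove_of_castSucc_lt _ _ (by rw [Fin.lt_def] at h ⊢; simp; omega)]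
    · rw [Fin.contractNth_apply_of_gt _ _ _ _ (by simpa using h),
        Fin.succAbove_of_le_castSucc _ _ (by rw [Fin.lt_def] at h; rw [Fin.le_def]; simp; omega)]
  rw [Finset.prod_congr rfl h1, Finset.prod_congr rfl h2,
    Fin.contractNth_apply_of_eq _ _ _ _ (by simp), map_mul, toAdd_mul]
  beta_reduce
  rw [Fin.succAbove_castSucc_self, Fin.succAbove_succ_self]
  ring

lemma alt_telescope (n : ℕ) (T : Fin (n + 1) → ℤ) :
    T 0 + (∑ i : Fin n, (-1 : ℤ) ^ ((i : ℕ) + 1) * (T i.castSucc + T i.succ))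
      + (-1) ^ (n + 1) * T (Fin.last n) = 0 := by
  induction n with
  | zero => simp
  | succ n ih =>
    have := ih (fun i => T i.castSucc)
    rw [Fin.sum_univ_castSucc]
    simp only [Fin.val_castSucc, Fin.val_last, ← Fin.castSucc_succ, Fin.castSucc_zero, Fin.succ_last] at this ⊢
    rw [pow_succ _ (n + 1)]
    linear_combination this

lemma prodCochain_d {n : ℕ} (φ : Fin n → L →* Multiplicative ℤ) :
    inhomogeneousCochains.d (Rep.trivial ℤ L ℤ) n (prodCochain φ) = 0 := by
  funext g
  refine (trivial_d_apply n (prodCochain φ) g).trans ?_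
  rw [Fin.sum_univ_castSucc]
  simp only [prodCochain_contract, contractNth_last]
  have := alt_telescope n (fun m => prodCochain φ (fun l => g (m.succAbove l)))
  simp only [Fin.succAbove_zero, Fin.succAbove_last] at this
  rw [← add_assoc]
  exact this

/-- The class of a product of homomorphisms. -/
noncomputable def prodClass {n : ℕ} (φ : Fin n → L →* Multiplicative ℤ) :
    groupCohomology (Rep.trivial ℤ L ℤ) n :=
  π _ n (cocyclesMk (A := Rep.trivial ℤ L ℤ) (prodCochain φ) (prodCochain_d φ))

lemma antisym_comp_d {j : ℕ} (v : Fin j → L) (i : ℕ) :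
    (inhomogeneousCochains (Rep.trivial ℤ L ℤ)).d i j ≫
      (ModuleCat.ofHom (antisym v) : ModuleCat.of ℤ ((Fin j → L) → ℤ) ⟶ ModuleCat.of ℤ ℤ) = 0 := by
  by_cases h : i + 1 = j
  · subst h
    rw [inhomogeneousCochains.d_def]
    ext F
    exact antisym_d v F
  · rw [HomologicalComplex.shape _ _ _ h, Limits.zero_comp]

/-- The pairing of cohomology classes with antisymmetrized chains. -/
noncomputable def pairing {j : ℕ} (v : Fin j → L) :
    groupCohomology (Rep.trivial ℤ L ℤ) j ⟶ ModuleCat.of ℤ ℤ :=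
  (inhomogeneousCochains (Rep.trivial ℤ L ℤ)).homologyι j ≫
    (inhomogeneousCochains (Rep.trivial ℤ L ℤ)).descOpcycles (ModuleCat.ofHom (antisym v)) _ rfl
      (antisym_comp_d v _)

lemma pairing_π {j : ℕ} (v : Fin j → L) (z : cocycles (Rep.trivial ℤ L ℤ) j) :
    pairing v (π _ j z) = antisym v (iCocycles (Rep.trivial ℤ L ℤ) j z) := by
  have h : (π (Rep.trivial ℤ L ℤ) j) ≫ pairing v =
      iCocycles (Rep.trivial ℤ L ℤ) j ≫ ModuleCat.ofHom (antisym v) := by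
    exact (HomologicalComplex.homology_π_ι_assoc _ _).trans
      (congrArg _ (HomologicalComplex.p_descOpcycles _ _ _ _ _))
  exact LinearMap.congr_fun (congrArg ModuleCat.Hom.hom h) z

lemma pairing_prodClass {j : ℕ} (v : Fin j → L) (φ : Fin j → L →* Multiplicative ℤ) :
    pairing v (prodClass φ) = antisym v (prodCochain φ) := by
  unfold prodClass
  rw [pairing_π, iCocycles_mk]

lemma pairing_map {j : ℕ} (v : Fin j → L) (f : L →* L) (x : groupCohomology (Rep.trivial ℤ L ℤ) j)
    (τ : ℤ →ₗ[ℤ] ℤ) (hτ : ∀ a, τ a = a) (h) :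
    pairing v ((HomologicalComplex.homologyMap
      (Crystal.cochainsMap (Rep.trivial ℤ L ℤ) (Rep.trivial ℤ L ℤ) f τ h) j).hom x) =
      pairing (fun i => f (v i)) x := by
  induction x using groupCohomology_induction_on with
  | h z =>
    have h1 := LinearMap.congr_fun (congrArg ModuleCat.Hom.hom (HomologicalComplex.homologyπ_naturality
      (Crystal.cochainsMap (Rep.trivial ℤ L ℤ) (Rep.trivial ℤ L ℤ) f τ h) j)) z
    have h2 := LinearMap.congr_fun (congrArg ModuleCat.Hom.hom (HomologicalComplex.cyclesMap_i
      (Crystal.cochainsMap (Rep.trivial ℤ L ℤ) (Rep.trivial ℤ L ℤ) f τ h) j)) z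
    refine (congrArg _ h1).trans ?_
    refine (pairing_π v _).trans ?_
    refine (congrArg _ h2).trans ?_
    rw [pairing_π]
    show antisym v (fun w => τ (iCocycles (Rep.trivial ℤ L ℤ) j z (fun i => f (w i)))) = _
    simp only [hτ]
    rfl
end Pairing

section Coordinates
open CategoryTheory groupCohomology Matrix

/-- Coordinate homomorphisms of the lattice. -/
def coordHom (i : Fin 4) : Crystal.Lat 4 →* Multiplicative ℤ :=
  MonoidHom.mk' (fun v => Multiplicative.ofAdd (v.toAdd i)) (fun _ _ => rfl)

/-- Standard basis of the lattice. -/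
def stdVec (i : Fin 4) : Crystal.Lat 4 := Multiplicative.ofAdd (Pi.single i 1)

/-- Minors of a matrix. -/
def minorOf {j : ℕ} (A : Matrix (Fin 4) (Fin 4) ℤ) (I J : Fin j → Fin 4) : ℤ :=
  ∑ σ : Equiv.Perm (Fin j), (Equiv.Perm.sign σ : ℤ) * ∏ l, A (I l) (J (σ l))

lemma antisym_prod {j : ℕ} (A : Matrix (Fin 4) (Fin 4) ℤ) (f : Crystal.Lat 4 →* Crystal.Lat 4)
    (hf : ∀ v, (f v).toAdd = A *ᵥ v.toAdd) (I J : Fin j → Fin 4) :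
    antisym (fun l => f (stdVec (J l))) (prodCochain fun l => coordHom (I l)) = minorOf A I J := by
  rw [antisym_apply]
  refine Finset.sum_congr rfl fun σ _ => congrArg _ (Finset.prod_congr rfl fun l _ => ?_)
  show (f (stdVec (J (σ l)))).toAdd (I l) = _
  rw [hf]
  simp [stdVec]

lemma action_inv (v : Crystal.Lat 4) :
    (Crystal.matAction 4 holM holM_pow (Multiplicative.ofAdd (1 : ZMod 4))⁻¹ v).toAdd =
      (holM ^ 3) *ᵥ v.toAdd := by
  have h : ∀ w : Crystal.Lat 4, (Crystal.glToAut 4 (Crystal.matUnit holM 3 holM_pow) w).toAdd =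
    holM *ᵥ w.toAdd := fun w => rfl
  have h3 : Crystal.matAction 4 holM holM_pow (Multiplicative.ofAdd (1 : ZMod 4))⁻¹ =
    (Crystal.glToAut 4 (Crystal.matUnit holM 3 holM_pow)) ^ 3 := rfl
  rw [h3, pow_succ, pow_two, MulAut.mul_apply, MulAut.mul_apply, h, h, h]
  simp [pow_succ, Matrix.mulVec_mulVec, Matrix.mul_assoc]

/-- The coefficient representation. -/
noncomputable abbrev cR (j : ℕ) : Rep ℤ (Multiplicative (ZMod 4)) :=
  Crystal.cohRep (Crystal.matAction 4 holM holM_pow)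
    (1 : Representation ℤ (Multiplicative (ZMod 4)) ℤ) j

/-- The generator. -/
abbrev gen4 : Multiplicative (ZMod 4) := Multiplicative.ofAdd (1 : ZMod 4)

lemma pairing_gen {j : ℕ} (v : Fin j → Crystal.Lat 4) (x : cR j) :
    pairing v ((cR j).ρ gen4 x) =
      pairing (fun l => Crystal.matAction 4 holM holM_pow gen4⁻¹ (v l)) x :=
  pairing_map v (Crystal.matAction 4 holM holM_pow gen4⁻¹).toMonoidHom x _ (fun _ => rfl) _

lemma exists_coord (j N : ℕ) (hN : Nat.choose 4 j = N) (idx : Fin N → Fin j → Fin 4)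
    (B : Matrix (Fin N) (Fin N) ℤ)
    (h1 : ∀ I J, minorOf 1 (idx I) (idx J) = if I = J then 1 else 0)
    (h2 : ∀ I J, minorOf (holM ^ 3) (idx I) (idx J) = B J I) :
    ∃ c : cR j ≃+ (Fin N → ℤ), ∀ x, c ((cR j).ρ gen4 x) = B *ᵥ c x := by
  let X := groupCohomology (Rep.trivial ℤ (Crystal.Lat 4) ℤ) j
  let P : Fin N → X := fun I => prodClass fun l => coordHom (idx I l)
  let c : X →+ (Fin N → ℤ) :=
    AddMonoidHom.mk' (fun x J => pairing (fun l => stdVec (idx J l)) x)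
      (fun x y => by funext J; exact map_add _ x y)
  have hc : ∀ x J, c x J = pairing (fun l => stdVec (idx J l)) x := fun _ _ => rfl
  have hcP : ∀ I J, c (P I) J = if I = J then 1 else 0 := by
    intro I J
    rw [hc, ← h1 I J]
    refine (pairing_prodClass _ _).trans ?_
    exact antisym_prod 1 (MonoidHom.id _) (fun v => by simp) _ _
  have hcs : ∀ y : Fin N → ℤ, c (∑ I, y I • P I) = y := by
    intro y
    funext J
    rw [map_sum, Finset.sum_apply]
    simp only [map_zsmul, Pi.smul_apply, hcP]
    simp
  have hsurj : Function.Surjective c := fun y => ⟨_, hcs y⟩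
  have hg := gen_bound 4 (Crystal.Lat 4) (MulEquiv.refl _) j
  rw [hN] at hg
  obtain ⟨f, hf⟩ := hg
  have hinj0 : Function.Injective (c.comp f).toIntLinearMap :=
    IsNoetherian.injective_of_surjective_endomorphism _ (hsurj.comp hf)
  have hinj : Function.Injective c := by
    intro x y hxy
    obtain ⟨a, rfl⟩ := hf x
    obtain ⟨b, rfl⟩ := hf y
    rw [hinj0 hxy]
  refine ⟨AddEquiv.ofBijective c ⟨hinj, hsurj⟩, fun x => ?_⟩
  change c ((cR j).ρ gen4 x) = B *ᵥ c x
  obtain ⟨y, rfl⟩ : ∃ y : Fin N → ℤ, x = ∑ I, y I • P I := ⟨c x, hinj (hcs _).symm⟩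
  rw [hcs]
  funext J
  refine (pairing_gen (fun l => stdVec (idx J l)) (∑ I, y I • P I : X)).trans ?_
  have h3 : ∀ I, pairing (fun l => Crystal.matAction 4 holM holM_pow gen4⁻¹ (stdVec (idx J l))) (P I)
      = B J I := by
    intro I
    rw [← h2 I J]
    refine (pairing_prodClass _ _).trans ?_
    exact antisym_prod (holM ^ 3) (Crystal.matAction 4 holM holM_pow gen4⁻¹).toMonoidHom
      action_inv _ _
  refine (map_sum _ _ _).trans ?_
  refine Finset.sum_congr rfl fun I _ => ?_
  refine (map_zsmul _ _ _).trans ?_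
  rw [h3, smul_eq_mul, mul_comm]

end Coordinates

section Certificates
open CategoryTheory groupCohomology Matrix Rep.FiniteCyclicGroup

lemma cert_equiv {V X : Type} [AddCommGroup V] [AddCommGroup X] {N : ℕ} (d : ℕ)
    (c : V ≃+ (Fin N → ℤ)) (P Q : Matrix (Fin N) (Fin N) ℤ) (S : AddSubgroup V)
    (hS : ∀ x, x ∈ S ↔ P *ᵥ c x = 0) (q : S →+ X) (hq : Function.Surjective q)
    (hq0 : ∀ x, q x = 0 ↔ ∃ y, Q *ᵥ y = c x.1)
    (w l u : Fin N → ℤ) (K K' : Matrix (Fin N) (Fin N) ℤ) (e : ℤ)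
    (h1 : P *ᵥ w = 0) (h2 : ∀ i, (d : ℤ) ∣ (l ᵥ* Q) i) (h3 : (d : ℤ) ∣ l ⬝ᵥ w - 1)
    (h4 : Q *ᵥ u = (d : ℤ) • w) (he : e ≠ 0)
    (h5 : e • (1 - vecMulVec w l - Q * K) = K' * P) : Nonempty (X ≃+ ZMod d) := by
  let θ : S →+ ZMod d := AddMonoidHom.mk' (fun x => ((l ⬝ᵥ c x.1 : ℤ) : ZMod d))
    (fun x y => by simp [dotProduct_add])
  have hθ : ∀ x, θ x = ((l ⬝ᵥ c x.1 : ℤ) : ZMod d) := fun _ => rfl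
  have hsurj : Function.Surjective θ := by
    intro z
    obtain ⟨a, rfl⟩ := ZMod.intCast_surjective z
    refine ⟨⟨c.symm (a • w), ?_⟩, ?_⟩
    · rw [hS, AddEquiv.apply_symm_apply, mulVec_smul, h1, smul_zero]
    · rw [hθ]
      simp only [AddEquiv.apply_symm_apply, dotProduct_smul, smul_eq_mul]
      obtain ⟨b, hb⟩ := h3
      rw [sub_eq_iff_eq_add.mp hb]
      simp
  have hker : q.ker = θ.ker := by
    ext x
    rw [AddMonoidHom.mem_ker, AddMonoidHom.mem_ker, hq0, hθ, ZMod.intCast_zmod_eq_zero_iff_dvd]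
    constructor
    · rintro ⟨y, hy⟩
      rw [← hy, dotProduct_mulVec]
      exact Finset.dvd_sum fun i _ => Dvd.dvd.mul_right (h2 i) _
    · rintro ⟨b, hb⟩
      have hx : P *ᵥ c x.1 = 0 := (hS _).1 x.2
      have h6 := congrArg (fun A => A *ᵥ c x.1) h5
      simp only [smul_mulVec, ← mulVec_mulVec, hx, mulVec_zero, sub_mulVec, one_mulVec] at h6
      have h7 := (smul_eq_zero.1 h6).resolve_left he
      have h8 : vecMulVec w l *ᵥ c x.1 = (l ⬝ᵥ c x.1) • w := by
        rw [vecMulVec_mulVec]; simp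
      refine ⟨b • u + K *ᵥ c x.1, ?_⟩
      rw [mulVec_add, mulVec_smul, h4, smul_smul, mul_comm b, ← hb, ← h8]
      rw [sub_sub, sub_eq_zero] at h7
      exact h7.symm
  exact ⟨((QuotientAddGroup.quotientKerEquivOfSurjective q hq).symm.trans
    (QuotientAddGroup.quotientAddEquivOfEq hker)).trans
    (QuotientAddGroup.quotientKerEquivOfSurjective θ hsurj)⟩

section General
lemma epi_sandwich {C : Type*} [Category C] {X Y Z W : C} (a : X ≅ Y) (p : Y ⟶ Z) [Epi p]
    (b : Z ≅ W) : Epi (a.hom ≫ p ≫ b.hom) := inferInstance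

universe w
variable {k G : Type w} [CommRing k] [CommGroup G] [Fintype G] (A : Rep k G) (g : G)

lemma sub_toLin (x : A) :
    (Rep.applyAsHom A g - 𝟙 A).hom.toLinearMap x = A.ρ g x - x := by
  simp [Rep.sub_hom, Rep.applyAsHom]

lemma norm_toLin (x : A) : A.norm.hom.toLinearMap x = ∑ h, A.ρ h x := by
  change A.ρ.norm x = _
  simp [Representation.norm]

lemma pres_zero (hg : ∀ x, x ∈ Subgroup.zpowers g) : ∃ (S : AddSubgroup A) (q : S →+ groupCohomology A 0),
    (∀ x, x ∈ S ↔ A.ρ g x - x = 0) ∧ Function.Surjective q ∧ ∀ x, q x = 0 ↔ x.1 = 0 := by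
  let E := (groupCohomologyIso₀ A g hg).toLinearEquiv.symm
  refine ⟨(LinearMap.ker (Rep.applyAsHom A g - 𝟙 A).hom.toLinearMap).toAddSubgroup,
    E.toLinearMap.toAddMonoidHom, fun x => ?_, E.surjective, fun x => ?_⟩
  · rw [← sub_toLin]
    rfl
  · change E x = 0 ↔ _
    rw [map_eq_zero_iff E E.injective]
    exact Subtype.ext_iff

lemma pres_even (hg : ∀ x, x ∈ Subgroup.zpowers g) (i : ℕ) (hi0 : i ≠ 0) (hi : Even i) :
    ∃ (S : AddSubgroup A) (q : S →+ groupCohomology A i),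
    (∀ x, x ∈ S ↔ A.ρ g x - x = 0) ∧ Function.Surjective q ∧
      ∀ x, q x = 0 ↔ ∃ y, ∑ h, A.ρ h y = x.1 := by
  have : NeZero i := ⟨hi0⟩
  have hs : Function.Surjective (groupCohomologyπEven A g hg i hi) := by
    apply (ModuleCat.epi_iff_surjective _).1
    exact epi_sandwich (ShortComplex.moduleCatCyclesIso (normHomCompSub A g)).symm
      (ShortComplex.homologyπ (normHomCompSub A g)) (groupCohomologyIsoEven A g hg i hi).symm
  refine ⟨(LinearMap.ker (Rep.applyAsHom A g - 𝟙 A).hom.toLinearMap).toAddSubgroup,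
    (groupCohomologyπEven A g hg i hi).hom.toAddMonoidHom, fun x => ?_, hs, fun x => ?_⟩
  · rw [← sub_toLin]
    rfl
  · refine (groupCohomologyπEven_eq_zero_iff A g hg i hi x).trans ?_
    refine exists_congr fun y => ?_
    rw [norm_toLin]

lemma pres_odd (hg : ∀ x, x ∈ Subgroup.zpowers g) (i : ℕ) (hi : Odd i) :
    ∃ (S : AddSubgroup A) (q : S →+ groupCohomology A i),
    (∀ x, x ∈ S ↔ ∑ h, A.ρ h x = 0) ∧ Function.Surjective q ∧
      ∀ x, q x = 0 ↔ ∃ y, A.ρ g y - y = x.1 := by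
  have hs : Function.Surjective (groupCohomologyπOdd A g hg i hi) := by
    apply (ModuleCat.epi_iff_surjective _).1
    exact epi_sandwich (ShortComplex.moduleCatCyclesIso (subCompNormHom A g)).symm
      (ShortComplex.homologyπ (subCompNormHom A g)) (groupCohomologyIsoOdd A g hg i hi).symm
  refine ⟨(LinearMap.ker A.norm.hom.toLinearMap).toAddSubgroup,
    (groupCohomologyπOdd A g hg i hi).hom.toAddMonoidHom, fun x => ?_, hs, fun x => ?_⟩
  · rw [← norm_toLin]
    rfl
  · refine (groupCohomologyπOdd_eq_zero_iff A g hg i hi x).trans ?_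
    refine exists_congr fun y => ?_
    rw [sub_toLin]

end General

lemma gen4_mem (x : Multiplicative (ZMod 4)) : x ∈ Subgroup.zpowers gen4 := by
  refine ⟨(x.toAdd.val : ℤ), ?_⟩
  revert x
  decide

/-- The norm matrix. -/
def nrm {N : ℕ} (B : Matrix (Fin N) (Fin N) ℤ) : Matrix (Fin N) (Fin N) ℤ :=
  1 + B + B * B + B * B * B

lemma coord_norm {j N : ℕ} (B : Matrix (Fin N) (Fin N) ℤ) (c : cR j ≃+ (Fin N → ℤ))
    (hc : ∀ x, c ((cR j).ρ gen4 x) = B *ᵥ c x) (x : cR j) :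
    c (∑ g, (cR j).ρ g x) = nrm B *ᵥ c x := by
  have h' : ∑ g, (cR j).ρ g x = ∑ k : Fin 4, (cR j).ρ (gen4 ^ (k : ℕ)) x := by
    refine Fintype.sum_equiv (Multiplicative.toAdd : Multiplicative (ZMod 4) ≃ ZMod 4) _
      (fun k : Fin 4 => (cR j).ρ (gen4 ^ (k : ℕ)) x) fun g => ?_
    have : g = gen4 ^ ((Multiplicative.toAdd g : Fin 4) : ℕ) := by revert g; decide
    exact congrArg (fun g => (cR j).ρ g x) this
  have p0 : (cR j).ρ (gen4 ^ ((0 : Fin 4) : ℕ)) x = x := by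
    change (cR j).ρ (gen4 ^ 0) x = x
    rw [pow_zero, map_one]; rfl
  have p1 : (cR j).ρ (gen4 ^ ((1 : Fin 4) : ℕ)) x = (cR j).ρ gen4 x := by
    change (cR j).ρ (gen4 ^ 1) x = _
    rw [pow_one]
  have p2 : (cR j).ρ (gen4 ^ ((2 : Fin 4) : ℕ)) x = (cR j).ρ gen4 ((cR j).ρ gen4 x) := by
    change (cR j).ρ (gen4 ^ 2) x = _
    rw [pow_two, map_mul]; rfl
  have p3 : (cR j).ρ (gen4 ^ ((3 : Fin 4) : ℕ)) x =
      (cR j).ρ gen4 ((cR j).ρ gen4 ((cR j).ρ gen4 x)) := by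
    change (cR j).ρ (gen4 ^ 3) x = _
    rw [pow_succ, pow_two, map_mul, map_mul]; rfl
  rw [h', Fin.sum_univ_four, p0, p1, p2, p3, map_add, map_add, map_add]
  simp only [hc, nrm, add_mulVec, one_mulVec, mulVec_mulVec, Matrix.mul_assoc]

lemma coord_sub {j N : ℕ} (B : Matrix (Fin N) (Fin N) ℤ) (c : cR j ≃+ (Fin N → ℤ))
    (hc : ∀ x, c ((cR j).ρ gen4 x) = B *ᵥ c x) (x : cR j) :
    c ((cR j).ρ gen4 x - x) = (B - 1) *ᵥ c x := by
  rw [map_sub, hc, sub_mulVec, one_mulVec]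

/-- Certificates for the structure of `ker P / im Q`. -/
def Cert {N : ℕ} (d : ℕ) (P Q : Matrix (Fin N) (Fin N) ℤ) : Prop :=
  ∃ (w l u : Fin N → ℤ) (K K' : Matrix (Fin N) (Fin N) ℤ) (e : ℤ),
    P *ᵥ w = 0 ∧ (∀ i, (d : ℤ) ∣ (l ᵥ* Q) i) ∧ (d : ℤ) ∣ l ⬝ᵥ w - 1 ∧
    Q *ᵥ u = (d : ℤ) • w ∧ e ≠ 0 ∧ e • (1 - vecMulVec w l - Q * K) = K' * P

lemma cert_zero {j N : ℕ} (B : Matrix (Fin N) (Fin N) ℤ) (c : cR j ≃+ (Fin N → ℤ))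
    (hc : ∀ x, c ((cR j).ρ gen4 x) = B *ᵥ c x) (d : ℕ) (h : Cert d (B - 1) 0) :
    Nonempty (Hc 0 j ≃+ ZMod d) := by
  obtain ⟨w, l, u, K, K', e, h1, h2, h3, h4, h5, h6⟩ := h
  obtain ⟨S, q, hS, hq, hq0⟩ := pres_zero (cR j) gen4 gen4_mem
  refine cert_equiv d c (B - 1) 0 S (fun x => ?_) q hq (fun x => ?_)
    w l u K K' e h1 h2 h3 h4 h5 h6
  · rw [hS, ← coord_sub B c hc, map_eq_zero_iff c c.injective]
  · rw [hq0]
    simp only [zero_mulVec, exists_const]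
    rw [eq_comm (a := (0 : Fin N → ℤ)), map_eq_zero_iff c c.injective]

lemma cert_even {j N : ℕ} (B : Matrix (Fin N) (Fin N) ℤ) (c : cR j ≃+ (Fin N → ℤ))
    (hc : ∀ x, c ((cR j).ρ gen4 x) = B *ᵥ c x) (d : ℕ) (h : Cert d (B - 1) (nrm B))
    (i : ℕ) (hi0 : i ≠ 0) (hi : Even i) :
    Nonempty (Hc i j ≃+ ZMod d) := by
  obtain ⟨w, l, u, K, K', e, h1, h2, h3, h4, h5, h6⟩ := h
  obtain ⟨S, q, hS, hq, hq0⟩ := pres_even (cR j) gen4 gen4_mem i hi0 hi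
  refine cert_equiv d c (B - 1) (nrm B) S (fun x => ?_) q hq (fun x => ?_)
    w l u K K' e h1 h2 h3 h4 h5 h6
  · rw [hS, ← coord_sub B c hc, map_eq_zero_iff c c.injective]
  · rw [hq0]
    constructor
    · rintro ⟨y, hy⟩
      exact ⟨c y, by rw [← coord_norm B c hc, hy]⟩
    · rintro ⟨y, hy⟩
      refine ⟨c.symm y, c.injective ?_⟩
      rw [coord_norm B c hc, AddEquiv.apply_symm_apply, hy]

lemma cert_odd {j N : ℕ} (B : Matrix (Fin N) (Fin N) ℤ) (c : cR j ≃+ (Fin N → ℤ))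
    (hc : ∀ x, c ((cR j).ρ gen4 x) = B *ᵥ c x) (d : ℕ) (h : Cert d (nrm B) (B - 1))
    (i : ℕ) (hi : Odd i) :
    Nonempty (Hc i j ≃+ ZMod d) := by
  obtain ⟨w, l, u, K, K', e, h1, h2, h3, h4, h5, h6⟩ := h
  obtain ⟨S, q, hS, hq, hq0⟩ := pres_odd (cR j) gen4 gen4_mem i hi
  refine cert_equiv d c (nrm B) (B - 1) S (fun x => ?_) q hq (fun x => ?_)
    w l u K K' e h1 h2 h3 h4 h5 h6
  · rw [hS, ← coord_norm B c hc, map_eq_zero_iff c c.injective]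
  · rw [hq0]
    constructor
    · rintro ⟨y, hy⟩
      exact ⟨c y, by rw [← coord_sub B c hc, hy]⟩
    · rintro ⟨y, hy⟩
      refine ⟨c.symm y, c.injective ?_⟩
      rw [coord_sub B c hc, AddEquiv.apply_symm_apply, hy]

end Certificates

section Cases
open Matrix

/-- Everything about a given `j`. -/
def Pack (j d0 dodd deven : ℕ) : Prop :=
  Nonempty (Hc 0 j ≃+ ZMod d0) ∧ (∀ i, Odd i → Nonempty (Hc i j ≃+ ZMod dodd)) ∧
    (∀ i, i ≠ 0 → Even i → Nonempty (Hc i j ≃+ ZMod deven))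

lemma pack_of (j N : ℕ) (hN : Nat.choose 4 j = N) (idx : Fin N → Fin j → Fin 4)
    (B : Matrix (Fin N) (Fin N) ℤ)
    (h1 : ∀ I J, minorOf 1 (idx I) (idx J) = if I = J then 1 else 0)
    (h2 : ∀ I J, minorOf (holM ^ 3) (idx I) (idx J) = B J I) (d0 dodd deven : ℕ)
    (c0 : Cert d0 (B - 1) 0) (c1 : Cert dodd (nrm B) (B - 1)) (c2 : Cert deven (B - 1) (nrm B)) :
    Pack j d0 dodd deven := by
  obtain ⟨c, hc⟩ := exists_coord j N hN idx B h1 h2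
  exact ⟨cert_zero B c hc _ c0, cert_odd B c hc _ c1, cert_even B c hc _ c2⟩

lemma pack0 : Pack 0 0 1 4 := by
  refine pack_of 0 1 rfl ![![]] !![1] (by decide) (by decide) _ _ _ ?_ ?_ ?_
  · exact ⟨![1], ![1], ![0], !![0], !![0], 1, by decide⟩
  · exact ⟨![0], ![0], ![0], !![0], !![1], 4, by decide⟩
  · exact ⟨![1], ![1], ![1], !![0], !![0], 1, by decide⟩

lemma pack1 : Pack 1 0 2 2 := by
  refine pack_of 1 4 rfl ![![0], ![1], ![2], ![3]]
    !![0, 1, 0, 0; -1, 0, 0, 0; 0, 0, -1, 0; 1, 0, 1, 1] (by decide) (by decide) _ _ _ ?_ ?_ ?_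
  · exact ⟨![0, 0, 0, 1], ![0, 0, 0, 1], 0, 0,
      !![0, 0, 1, 2; 2, 0, 1, 2; 0, 0, -1, 0; 0, 0, 0, 0], 2, by decide⟩
  · exact ⟨![1, 0, -1, 0], ![0, 0, -1, 0], ![-1, 1, 1, 0],
      !![0, 0, 0, 1; 0, -1, 0, -1; 0, 0, 0, 0; 0, 0, 0, 0],
      !![0, 0, 0, 1; 0, 0, 0, 0; 0, 0, 0, 0; 0, 0, 0, 0], 2, by decide⟩
  · exact ⟨![0, 0, 0, 1], ![0, 0, 0, 1], ![1, 0, 0, 0], 0,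
      !![0, 0, 1, 2; 2, 0, 1, 2; 0, 0, -1, 0; 0, 0, 0, 0], 2, by decide⟩

lemma pack2 : Pack 2 0 4 2 := by
  refine pack_of 2 6 rfl ![![0, 1], ![0, 2], ![0, 3], ![1, 2], ![1, 3], ![2, 3]]
    !![1, 0, 0, 0, 0, 0; 0, 0, 0, -1, 0, 0; -1, 0, 0, 1, 1, 0; 0, 1, 0, 0, 0, 0;
      0, -1, -1, 0, 0, 0; 0, 1, 0, 0, 0, -1] (by decide +kernel) (by decide +kernel) _ _ _ ?_ ?_ ?_
  · exact ⟨![2, 0, -1, 0, 1, 0], ![0, 0, 0, 0, 1, 0], 0, 0,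
      !![0, -4, -4, 0, 4, 0; 0, -2, 0, 2, 0, 0; 0, 2, 0, -2, -4, 0; 0, -2, 0, -2, 0, 0;
        0, 0, 0, 0, 0, 0; 0, -1, 0, 1, 0, -2], 4, by decide +kernel⟩
  · exact ⟨![0, 0, 0, 1, 0, 0], ![0, -1, 0, 1, 0, -2], ![0, 2, -2, -2, 0, 1],
      !![0, -1, -1, 0, 1, 0; 0, 0, 0, 0, 0, 1; 0, 0, 0, 0, -1, -1; 0, -1, 0, 0, 0, -1;
        0, 0, 0, 0, 0, 0; 0, 0, 0, 0, 0, 0],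
      !![0, 0, -1, 0, 0, 0; 0, 0, 0, 0, 0, 0; 0, 0, 0, 0, 0, 0; 0, 0, 0, 0, 0, 0;
        0, 0, 0, 0, 0, 0; 0, 0, 0, 0, 0, 0], 2, by decide +kernel⟩
  · exact ⟨![2, 0, -1, 0, 1, 0], ![0, 0, 0, 0, 1, 0], ![1, 0, 0, 0, 0, 0], 0,
      !![0, -4, -4, 0, 4, 0; 0, -2, 0, 2, 0, 0; 0, 2, 0, -2, -4, 0; 0, -2, 0, -2, 0, 0;
        0, 0, 0, 0, 0, 0; 0, -1, 0, 1, 0, -2], 4, by decide +kernel⟩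

lemma pack3 : Pack 3 0 2 2 := by
  refine pack_of 3 4 rfl ![![0, 1, 2], ![0, 1, 3], ![0, 2, 3], ![1, 2, 3]]
    !![-1, 0, 0, 0; 1, 1, 0, 0; -1, 0, 0, -1; 0, 0, 1, 0]
    (by decide +kernel) (by decide +kernel) _ _ _ ?_ ?_ ?_
  · exact ⟨![0, 1, 0, 0], ![0, 1, 0, 0], 0, 0,
      !![0, 2, 0, 0; 0, 0, 0, 0; 0, -1, -1, 1; 0, -1, -1, -1], 2, by decide +kernel⟩
  · exact ⟨![0, 0, 0, -1], ![0, -1, -1, -1], ![0, 0, -1, 1],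
      !![0, 1, 0, 0; 0, 0, 0, 0; 0, -1, -1, 0; 0, 0, 0, 0],
      !![0, 1, 0, 0; 0, 0, 0, 0; 0, 0, 0, 0; 0, 0, 0, 0], 2, by decide +kernel⟩
  · exact ⟨![0, 1, 0, 0], ![0, 1, 0, 0], ![1, 0, 0, 0], 0,
      !![0, 2, 0, 0; 0, 0, 0, 0; 0, -1, -1, 1; 0, -1, -1, -1], 2, by decide +kernel⟩

lemma pack4 : Pack 4 1 2 1 := by
  refine pack_of 4 1 rfl ![![0, 1, 2, 3]] !![-1] (by decide +kernel) (by decide +kernel) _ _ _ ?_ ?_ ?_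
  · exact ⟨![0], ![0], ![0], !![0], !![-1], 2, by decide⟩
  · exact ⟨![-1], ![-1], ![1], !![0], !![0], 1, by decide⟩
  · exact ⟨![0], ![0], ![0], !![0], !![-1], 2, by decide⟩

lemma pack_ge (j : ℕ) (hj : 5 ≤ j) : Pack j 1 1 1 := by
  refine pack_of j 0 (Nat.choose_eq_zero_of_lt (by omega)) ![] 0 (fun I => I.elim0)
    (fun I => I.elim0) _ _ _ ?_ ?_ ?_ <;>
  exact ⟨0, 0, 0, 0, 0, 1, by decide⟩

lemma sub_of {X : Type} [AddCommGroup X] (h : Nonempty (X ≃+ ZMod 1)) : Subsingleton X :=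
  h.some.toEquiv.subsingleton

end Cases

theorem cohomology_of_cyclic_with_induced_coefficients :
    (∀ j, j ≤ 3 → Nonempty (Hc 0 j ≃+ ℤ)) ∧
    (∀ i, 1 ≤ i → Nonempty (Hc i 1 ≃+ ZMod 2) ∧ Nonempty (Hc i 3 ≃+ ZMod 2)) ∧
    (∀ i, 2 ≤ i → Even i → Nonempty (Hc i 2 ≃+ ZMod 2)) ∧
    (∀ i, Odd i → Nonempty (Hc i 4 ≃+ ZMod 2)) ∧
    (∀ i, 2 ≤ i → Even i → Nonempty (Hc i 0 ≃+ ZMod 4)) ∧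
    (∀ i, Odd i → Nonempty (Hc i 2 ≃+ ZMod 4)) ∧
    (∀ i j, ¬ (i = 0 ∧ j ≤ 3) → ¬ (1 ≤ i ∧ (j = 1 ∨ j = 2 ∨ j = 3)) →
      ¬ (Odd i ∧ j = 4) → ¬ (2 ≤ i ∧ Even i ∧ j = 0) →
      Subsingleton (Hc i j)) := by
  refine ⟨?_, ?_, ?_, pack4.2.1, ?_, pack2.2.1, ?_⟩
  · intro j hj
    interval_cases j
    · exact pack0.1
    · exact pack1.1
    · exact pack2.1
    · exact pack3.1
  · intro i hi
    rcases Nat.even_or_odd i with h | h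
    · exact ⟨pack1.2.2 i (by omega) h, pack3.2.2 i (by omega) h⟩
    · exact ⟨pack1.2.1 i h, pack3.2.1 i h⟩
  · exact fun i hi h => pack2.2.2 i (by omega) h
  · exact fun i hi h => pack0.2.2 i (by omega) h
  · intro i j h1 h2 h3 h4
    have key : ∀ d1, Pack j 1 d1 1 → (Odd i → d1 = 1) → Subsingleton (Hc i j) := by
      intro d1 hp hd
      rcases Nat.even_or_odd i with h | h
      · by_cases hi : i = 0
        · subst hi
          exact sub_of hp.1
        · exact sub_of (hp.2.2 i hi h)
      · obtain rfl := hd h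
        exact sub_of (hp.2.1 i h)
    by_cases hj : 5 ≤ j
    · exact key 1 (pack_ge j hj) (fun _ => rfl)
    · by_cases hj4 : j = 4
      · subst hj4
        exact key 2 pack4 (fun h => absurd ⟨h, rfl⟩ h3)
      · have hj0 : j = 0 := by omega
        subst hj0
        have hi : i ≠ 0 := fun h => h1 ⟨h, by omega⟩
        rcases Nat.even_or_odd i with h | h
        · refine absurd ⟨?_, h, rfl⟩ h4
          rcases h with ⟨r, rfl⟩
          omega
        · exact sub_of (pack0.2.1 i h)
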